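/- Fix real P_t > 0, an integer G ≥ 1, and c > 0. Let (g_{i,j})_{i,j≥1} be a doubly-indexed i.i.d. array of standard complex Gaussian random variables, for each L ≥ 1 set Q_L = ⌈cL⌉, and let h_1,…,h_{Q_L} ∈ ℂ^L be the rows of the Q_L×L matrix (g_{i,j})_{1≤i≤Q_L,1≤j≤L}. Fix k and define the random variables X_L = (P_t/(G·Q_L·L))·‖h_k‖⁴ and Y_L = 1 + (P_t/(G·Q_L·L))·Σ_{ϑ≠k, 1≤ϑ≤Q_L} |h_k^T h_ϑ^*|². Then lim_{L→∞} E[ln(1 + X_L/Y_L)] = ln(1 + (1/c)·P_t/(P_t + G)). Consequently, the MF-based average sum-rate R̄^{MF}(G, cL) = c·G·L·E[ln(1 + X_L/Y_L)] satisfies R̄^{MF}(G, cL)/(c·G·L) → ln(1 + (1/c)·P_t/(P_t + G)) as L → ∞. -/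

import Mathlib

open MeasureTheory ProbabilityTheory
open scoped NNReal

/-- A family `g i` of complex random variables is i.i.d. standard complex Gaussian if the
real and imaginary parts of all its members form a jointly independent family of real
random variables, each distributed as `gaussianReal 0 (1/2)`. -/
def IsStdComplexGaussianFamily {Ω ι : Type*} [MeasurableSpace Ω] (P : Measure Ω)
    (g : ι → Ω → ℂ) : Prop :=
  iIndepFun (m := fun _ : ι × Bool => (inferInstance : MeasurableSpace ℝ))
      (fun p ω => if p.2 then (g p.1 ω).re else (g p.1 ω).im) P ∧
  ∀ p : ι × Bool,
    Measure.map (fun ω => if p.2 then (g p.1 ω).re else (g p.1 ω).im) P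
      = gaussianReal 0 (1 / 2 : ℝ≥0)

/-! The logarithm is Lipschitz on `[1, ∞)`, so it suffices that numerator and denominator of the
SINR converge in mean to constants. With `S = ‖h_k‖² / L`, the second-moment law of large numbers
gives `S → 1` in `L²`, which settles the numerator. For the interference, condition on `h_k`: the
terms `|h_kᵀ h_ϑ^*|²`, `ϑ ≠ k`, become independent,
with mean `‖h_k‖²` and second moment at most `(K + 3) ‖h_k‖⁴`, where `K` bounds the fourth moment
of an entry. Their average is thus within `O(Q^(-1/2)) ‖h_k‖²` of `‖h_k‖²` in conditional mean, and
dividing by `L` leaves the limit `1` of `S`. -/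

open Filter Topology

section LogRatio

lemma abs_log_sub_log_le {u v : ℝ} (hu : 1 ≤ u) (hv : 1 ≤ v) :
    |Real.log u - Real.log v| ≤ |u - v| := by
  wlog huv : v ≤ u generalizing u v
  · rw [abs_sub_comm, abs_sub_comm u]
    exact this hv hu (le_of_not_ge huv)
  have hv0 : 0 < v := by positivity
  rw [abs_of_nonneg (sub_nonneg.2 (Real.log_le_log hv0 huv)), abs_of_nonneg (sub_nonneg.2 huv),
    ← Real.log_div (by positivity) hv0.ne']
  calc Real.log (u / v) ≤ u / v - 1 := Real.log_le_sub_one_of_pos (by positivity)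
    _ = (u - v) / v := by field_simp
    _ ≤ u - v := div_le_self (sub_nonneg.2 huv) hv

lemma abs_log_one_add_div_sub_le {X Y x y : ℝ} (hX : 0 ≤ X) (hY : 1 ≤ Y) (hx : 0 ≤ x)
    (hy : 1 ≤ y) :
    |Real.log (1 + X / Y) - Real.log (1 + x / y)| ≤ |X - x| + x * |Y - y| := by
  have hXY : 0 ≤ X / Y := by positivity
  have hxy : 0 ≤ x / y := by positivity
  calc |Real.log (1 + X / Y) - Real.log (1 + x / y)|
      ≤ |1 + X / Y - (1 + x / y)| := abs_log_sub_log_le (by linarith) (by linarith)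
    _ = |(X - x) / Y - x * ((Y - y) / (Y * y))| := by congr 1; field_simp; ring
    _ ≤ |(X - x) / Y| + |x * ((Y - y) / (Y * y))| := abs_sub _ _
    _ = |X - x| / Y + x * (|Y - y| / (Y * y)) := by
      rw [abs_div, abs_mul, abs_div, abs_of_nonneg hx, abs_of_nonneg (by positivity : 0 ≤ Y),
        abs_of_nonneg (by positivity : 0 ≤ Y * y)]
    _ ≤ |X - x| + x * |Y - y| := by
      gcongr
      · exact div_le_self (abs_nonneg _) hY
      · exact div_le_self (abs_nonneg _) (one_le_mul_of_one_le_of_one_le hY hy)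

variable {Ω α : Type*} [MeasurableSpace Ω] {P : Measure Ω}

lemma integrable_log_one_add_div {X Y : Ω → ℝ} (hX : Integrable X P)
    (hYm : AEStronglyMeasurable Y P) (hX0 : ∀ ω, 0 ≤ X ω) (hY : ∀ ω, 1 ≤ Y ω) :
    Integrable (fun ω ↦ Real.log (1 + X ω / Y ω)) P := by
  refine hX.mono' (Real.measurable_log.comp_aemeasurable
    ((hX.aemeasurable.div hYm.aemeasurable).const_add 1)).aestronglyMeasurable
    (.of_forall fun ω ↦ ?_)
  have hXY : 0 ≤ X ω / Y ω := div_nonneg (hX0 ω) (zero_le_one.trans (hY ω))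
  rw [Real.norm_of_nonneg (Real.log_nonneg (by linarith))]
  linarith [Real.log_le_sub_one_of_pos (by linarith : 0 < 1 + X ω / Y ω),
    div_le_self (hX0 ω) (hY ω)]

theorem tendsto_integral_log_one_add_div [IsProbabilityMeasure P] {f : Filter α}
    {X Y : α → Ω → ℝ} {x y : ℝ} (hX : ∀ a, Integrable (X a) P) (hY : ∀ a, Integrable (Y a) P)
    (hX0 : ∀ a ω, 0 ≤ X a ω) (hY1 : ∀ a ω, 1 ≤ Y a ω) (hx : 0 ≤ x) (hy : 1 ≤ y)
    (hXx : Tendsto (fun a ↦ ∫ ω, |X a ω - x| ∂P) f (𝓝 0))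
    (hYy : Tendsto (fun a ↦ ∫ ω, |Y a ω - y| ∂P) f (𝓝 0)) :
    Tendsto (fun a ↦ ∫ ω, Real.log (1 + X a ω / Y a ω) ∂P) f (𝓝 (Real.log (1 + x / y))) := by
  have hXi (a : α) : Integrable (fun ω ↦ |X a ω - x|) P := ((hX a).sub (integrable_const x)).abs
  have hYi (a : α) : Integrable (fun ω ↦ |Y a ω - y|) P := ((hY a).sub (integrable_const y)).abs
  have hlog (a : α) := integrable_log_one_add_div (hX a) (hY a).1 (hX0 a) (hY1 a)
  rw [tendsto_iff_dist_tendsto_zero]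
  refine squeeze_zero (fun _ ↦ dist_nonneg) (fun a ↦ ?_)
    (by simpa only [mul_zero, add_zero] using hXx.add (hYy.const_mul x))
  calc dist (∫ ω, Real.log (1 + X a ω / Y a ω) ∂P) (Real.log (1 + x / y))
      = |∫ ω, (Real.log (1 + X a ω / Y a ω) - Real.log (1 + x / y)) ∂P| := by
        rw [integral_sub (hlog a) (integrable_const _), integral_const, probReal_univ, one_smul,
          Real.dist_eq]
    _ ≤ ∫ ω, |Real.log (1 + X a ω / Y a ω) - Real.log (1 + x / y)| ∂P :=
        abs_integral_le_integral_abs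
    _ ≤ ∫ ω, (|X a ω - x| + x * |Y a ω - y|) ∂P :=
        integral_mono ((hlog a).sub (integrable_const _)).abs ((hXi a).add ((hYi a).const_mul x))
          fun ω ↦ abs_log_one_add_div_sub_le (hX0 a ω) (hY1 a ω) hx hy
    _ = ∫ ω, |X a ω - x| ∂P + x * ∫ ω, |Y a ω - y| ∂P := by
        rw [integral_add (hXi a) ((hYi a).const_mul x), integral_const_mul]

end LogRatio

section MeanConvergence

variable {Ω α : Type*} [MeasurableSpace Ω] {P : Measure Ω} [IsProbabilityMeasure P]

lemma integral_abs_le_sqrt_integral_sq {D : Ω → ℝ} (hD : MemLp D 2 P) :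
    ∫ ω, |D ω| ∂P ≤ √(∫ ω, D ω ^ 2 ∂P) := by
  refine Real.le_sqrt_of_sq_le ?_
  have hVar := variance_nonneg |D| P
  rw [variance_eq_sub hD.abs] at hVar
  simpa only [Pi.pow_apply, Pi.abs_apply, sq_abs, sub_nonneg] using hVar

lemma tendsto_integral_abs_mul_sub {f : Filter α} {a : α → ℝ} {Z : α → Ω → ℝ} {r z : ℝ}
    (hZ : ∀ i, Integrable (Z i) P) (ha : Tendsto a f (𝓝 r))
    (hZz : Tendsto (fun i ↦ ∫ ω, |Z i ω - z| ∂P) f (𝓝 0)) :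
    Tendsto (fun i ↦ ∫ ω, |a i * Z i ω - r * z| ∂P) f (𝓝 0) := by
  have hZi (i : α) : Integrable (fun ω ↦ |Z i ω - z|) P := ((hZ i).sub (integrable_const z)).abs
  refine squeeze_zero (fun i ↦ integral_nonneg fun ω ↦ abs_nonneg _) (fun i ↦ ?_)
    (by simpa using (ha.abs.mul hZz).add ((ha.sub_const r).abs.mul_const |z|))
  calc ∫ ω, |a i * Z i ω - r * z| ∂P
      ≤ ∫ ω, (|a i| * |Z i ω - z| + |a i - r| * |z|) ∂P := by
        refine integral_mono (((hZ i).const_mul _).sub (integrable_const _)).abs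
          (((hZi i).const_mul _).add (integrable_const _)) fun ω ↦ ?_
        calc |a i * Z i ω - r * z| = |a i * (Z i ω - z) + (a i - r) * z| := by congr 1; ring
          _ ≤ |a i| * |Z i ω - z| + |a i - r| * |z| := by
            simpa only [abs_mul] using abs_add_le (a i * (Z i ω - z)) ((a i - r) * z)
    _ = |a i| * ∫ ω, |Z i ω - z| ∂P + |a i - r| * |z| := by
        rw [integral_add ((hZi i).const_mul _) (integrable_const _), integral_const_mul,
          integral_const, probReal_univ, one_smul]

lemma tendsto_integral_abs_sub_of_sq {f : Filter α} {Z : α → Ω → ℝ} {z : ℝ}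
    (hZ : ∀ i, MemLp (Z i) 2 P) (hZz : Tendsto (fun i ↦ ∫ ω, (Z i ω - z) ^ 2 ∂P) f (𝓝 0)) :
    Tendsto (fun i ↦ ∫ ω, |Z i ω - z| ∂P) f (𝓝 0) :=
  squeeze_zero (fun _ ↦ integral_nonneg fun _ ↦ abs_nonneg _)
    (fun i ↦ integral_abs_le_sqrt_integral_sq ((hZ i).sub (memLp_const z)))
    (by simpa only [Real.sqrt_zero] using hZz.sqrt)

lemma tendsto_integral_abs_sq_sub_sq {f : Filter α} {Z : α → Ω → ℝ} {z : ℝ}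
    (hZ : ∀ i, MemLp (Z i) 2 P) (hZz : Tendsto (fun i ↦ ∫ ω, (Z i ω - z) ^ 2 ∂P) f (𝓝 0)) :
    Tendsto (fun i ↦ ∫ ω, |Z i ω ^ 2 - z ^ 2| ∂P) f (𝓝 0) := by
  have hD (i : α) : MemLp (fun ω ↦ Z i ω - z) 2 P := (hZ i).sub (memLp_const z)
  have hDi (i : α) : Integrable (fun ω ↦ |Z i ω - z|) P := ((hD i).integrable one_le_two).abs
  refine squeeze_zero (fun i ↦ integral_nonneg fun ω ↦ abs_nonneg _) (fun i ↦ ?_)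
    (by simpa only [mul_zero, add_zero] using
      hZz.add ((tendsto_integral_abs_sub_of_sq hZ hZz).const_mul (2 * |z|)))
  rw [← integral_const_mul, ← integral_add (hD i).integrable_sq ((hDi i).const_mul _)]
  refine integral_mono ((hZ i).integrable_sq.sub (integrable_const _)).abs
    ((hD i).integrable_sq.add ((hDi i).const_mul _)) fun ω ↦ ?_
  calc |Z i ω ^ 2 - z ^ 2| = |(Z i ω - z) ^ 2 + 2 * z * (Z i ω - z)| := by congr 1; ring
    _ ≤ |(Z i ω - z) ^ 2| + |2 * z * (Z i ω - z)| := abs_add_le _ _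
    _ = (Z i ω - z) ^ 2 + 2 * |z| * |Z i ω - z| := by
      rw [abs_of_nonneg (sq_nonneg _), abs_mul, abs_mul, abs_two]

end MeanConvergence

section HilbertMoments

open scoped RealInnerProductSpace

lemma norm_add_pow_four_le {H : Type*} [NormedAddCommGroup H] [InnerProductSpace ℝ H] (a x : H) :
    ‖a + x‖ ^ 4 ≤ ‖a‖ ^ 4 + ‖x‖ ^ 4 + 6 * (‖a‖ ^ 2 * ‖x‖ ^ 2)
      + 4 * (⟪‖a‖ ^ 2 • a, x⟫ + ⟪‖x‖ ^ 2 • x, a⟫) := by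
  have hCS : ⟪a, x⟫ ^ 2 ≤ ‖a‖ ^ 2 * ‖x‖ ^ 2 := by
    rw [← mul_pow, ← sq_abs]
    gcongr
    exact abs_real_inner_le_norm a x
  rw [real_inner_smul_left, real_inner_smul_left, real_inner_comm a x]
  calc ‖a + x‖ ^ 4 = (‖a‖ ^ 2 + 2 * ⟪a, x⟫ + ‖x‖ ^ 2) ^ 2 := by rw [← norm_add_sq_real]; ring
    _ ≤ _ := by linear_combination 4 * hCS

variable {Ω ι H : Type*} [MeasurableSpace Ω] {P : Measure Ω} [NormedAddCommGroup H]

lemma integrable_norm_pow_of_memLp_four [IsFiniteMeasure P] {A : Ω → H} (hA : MemLp A 4 P)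
    {n : ℕ} (hn : n ≤ 4) : Integrable (fun ω ↦ ‖A ω‖ ^ n) P :=
  integrable_norm_pow_of_le hA.1 hn (hA.integrable_norm_pow four_ne_zero)

lemma integrable_norm_sq_smul_of_memLp_four [IsFiniteMeasure P] [NormedSpace ℝ H] {A : Ω → H}
    (hA : MemLp A 4 P) : Integrable (fun ω ↦ ‖A ω‖ ^ 2 • A ω) P := by
  refine (integrable_norm_pow_of_memLp_four hA (n := 3) (by norm_num)).mono'
    ((hA.1.norm.pow 2).smul hA.1) (.of_forall fun ω ↦ le_of_eq ?_)
  rw [norm_smul, norm_pow, norm_norm]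
  ring

variable [InnerProductSpace ℝ H] [MeasurableSpace H] [BorelSpace H] {A X : Ω → H}

lemma integrable_inner_of_indepFun (hAX : IndepFun A X P) (hA : Integrable A P)
    (hX : Integrable X P) : Integrable (fun ω ↦ ⟪A ω, X ω⟫) P :=
  hAX.integrable_bilin hA hX (innerSL ℝ)

lemma indepFun_norm_sq_smul (hAX : IndepFun A X P) :
    IndepFun (fun ω ↦ ‖A ω‖ ^ 2 • A ω) X P :=
  hAX.comp (by fun_prop : Continuous fun a : H ↦ ‖a‖ ^ 2 • a).measurable measurable_id

variable [CompleteSpace H]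

lemma integral_inner_eq_zero_of_indepFun (hAX : IndepFun A X P) (hA : Integrable A P)
    (hX : Integrable X P) (hX0 : ∫ ω, X ω ∂P = 0) : ∫ ω, ⟪A ω, X ω⟫ ∂P = 0 := by
  have hbilin := hAX.integral_bilin hA hX (innerSL ℝ)
  rwa [hX0, map_zero] at hbilin

variable [IsFiniteMeasure P]

lemma integral_norm_add_sq_of_indepFun (hAX : IndepFun A X P) (hA : MemLp A 2 P)
    (hX : MemLp X 2 P) (hX0 : ∫ ω, X ω ∂P = 0) :
    ∫ ω, ‖A ω + X ω‖ ^ 2 ∂P = ∫ ω, ‖A ω‖ ^ 2 ∂P + ∫ ω, ‖X ω‖ ^ 2 ∂P := by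
  have hA1 := hA.integrable one_le_two
  have hX1 := hX.integrable one_le_two
  have hinner := (integrable_inner_of_indepFun hAX hA1 hX1).const_mul 2
  simp_rw [norm_add_sq_real]
  rw [integral_add (hA.norm.integrable_sq.fun_add hinner) hX.norm.integrable_sq,
    integral_add hA.norm.integrable_sq hinner, integral_const_mul,
    integral_inner_eq_zero_of_indepFun hAX hA1 hX1 hX0, mul_zero, add_zero]

lemma integral_norm_add_pow_four_le_of_indepFun (hAX : IndepFun A X P) (hA : MemLp A 4 P)
    (hX : MemLp X 4 P) (hA0 : ∫ ω, A ω ∂P = 0) (hX0 : ∫ ω, X ω ∂P = 0) :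
    ∫ ω, ‖A ω + X ω‖ ^ 4 ∂P ≤ ∫ ω, ‖A ω‖ ^ 4 ∂P + ∫ ω, ‖X ω‖ ^ 4 ∂P
      + 6 * ((∫ ω, ‖A ω‖ ^ 2 ∂P) * ∫ ω, ‖X ω‖ ^ 2 ∂P) := by
  have hA1 := hA.integrable (by norm_num)
  have hX1 := hX.integrable (by norm_num)
  have hA2 := integrable_norm_pow_of_memLp_four hA (n := 2) (by norm_num)
  have hX2 := integrable_norm_pow_of_memLp_four hX (n := 2) (by norm_num)
  have hA3 := integrable_norm_sq_smul_of_memLp_four hA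
  have hX3 := integrable_norm_sq_smul_of_memLp_four hX
  have hA4 := integrable_norm_pow_of_memLp_four hA le_rfl
  have hX4 := integrable_norm_pow_of_memLp_four hX le_rfl
  have hA3X := indepFun_norm_sq_smul hAX
  have hX3A := indepFun_norm_sq_smul hAX.symm
  have hA2X2 : IndepFun (fun ω ↦ ‖A ω‖ ^ 2) (fun ω ↦ ‖X ω‖ ^ 2) P :=
    hAX.comp (measurable_norm.pow_const 2) (measurable_norm.pow_const 2)
  have hprod : Integrable (fun ω ↦ 6 * (‖A ω‖ ^ 2 * ‖X ω‖ ^ 2)) P :=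
    (hA2X2.integrable_mul hA2 hX2).const_mul 6
  have hcrossA := integrable_inner_of_indepFun hA3X hA3 hX1
  have hcrossX := integrable_inner_of_indepFun hX3A hX3 hA1
  have hcross := (hcrossA.fun_add hcrossX).const_mul 4
  calc ∫ ω, ‖A ω + X ω‖ ^ 4 ∂P
      ≤ ∫ ω, (‖A ω‖ ^ 4 + ‖X ω‖ ^ 4 + 6 * (‖A ω‖ ^ 2 * ‖X ω‖ ^ 2)
        + 4 * (⟪‖A ω‖ ^ 2 • A ω, X ω⟫ + ⟪‖X ω‖ ^ 2 • X ω, A ω⟫)) ∂P :=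
        integral_mono ((hA.add hX).integrable_norm_pow four_ne_zero)
          (((hA4.fun_add hX4).fun_add hprod).fun_add hcross)
          fun ω ↦ norm_add_pow_four_le (A ω) (X ω)
    _ = _ := by
        rw [integral_add ((hA4.fun_add hX4).fun_add hprod) hcross,
          integral_add (hA4.fun_add hX4) hprod, integral_add hA4 hX4, integral_const_mul,
          integral_const_mul, integral_add hcrossA hcrossX,
          integral_inner_eq_zero_of_indepFun hA3X hA3 hX1 hX0,
          integral_inner_eq_zero_of_indepFun hX3A hX3 hA1 hA0,
          hA2X2.integral_fun_mul_eq_mul_integral hA2.1 hX2.1, add_zero, mul_zero, add_zero]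

variable [SecondCountableTopology H] {X : ι → Ω → H}

theorem integral_norm_sum_sq_of_iIndepFun (hX : iIndepFun X P) (hm : ∀ i, Measurable (X i))
    (hL : ∀ i, MemLp (X i) 2 P) (h0 : ∀ i, ∫ ω, X i ω ∂P = 0) (s : Finset ι) :
    ∫ ω, ‖∑ i ∈ s, X i ω‖ ^ 2 ∂P = ∑ i ∈ s, ∫ ω, ‖X i ω‖ ^ 2 ∂P := by
  classical
  induction s using Finset.cons_induction with
  | empty => simp
  | cons i s hi ih =>
    have hind : IndepFun (fun ω ↦ ∑ j ∈ s, X j ω) (X i) P := by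
      simpa only [Finset.sum_fn] using hX.indepFun_finsetSum_of_notMem hm hi
    simp_rw [Finset.sum_cons, add_comm (X i _)]
    rw [integral_norm_add_sq_of_indepFun hind (memLp_finsetSum s fun j _ ↦ hL j) (hL i) (h0 i),
      ih, add_comm]

theorem integral_norm_sum_pow_four_le_of_iIndepFun (hX : iIndepFun X P)
    (hm : ∀ i, Measurable (X i)) (hL : ∀ i, MemLp (X i) 4 P) (h0 : ∀ i, ∫ ω, X i ω ∂P = 0)
    (s : Finset ι) :
    ∫ ω, ‖∑ i ∈ s, X i ω‖ ^ 4 ∂P ≤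
      ∑ i ∈ s, ∫ ω, ‖X i ω‖ ^ 4 ∂P + 3 * (∑ i ∈ s, ∫ ω, ‖X i ω‖ ^ 2 ∂P) ^ 2 := by
  classical
  have hL2 (i : ι) : MemLp (X i) 2 P := (hL i).mono_exponent (by norm_num)
  induction s using Finset.cons_induction with
  | empty => simp
  | cons i s hi ih =>
    have hind : IndepFun (fun ω ↦ ∑ j ∈ s, X j ω) (X i) P := by
      simpa only [Finset.sum_fn] using hX.indepFun_finsetSum_of_notMem hm hi
    have hmean : ∫ ω, ∑ j ∈ s, X j ω ∂P = 0 := by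
      rw [integral_finsetSum s fun j _ ↦ (hL j).integrable (by norm_num)]
      exact Finset.sum_eq_zero fun j _ ↦ h0 j
    have hstep := integral_norm_add_pow_four_le_of_indepFun hind (memLp_finsetSum s fun j _ ↦ hL j)
      (hL i) hmean (h0 i)
    rw [integral_norm_sum_sq_of_iIndepFun hX hm hL2 h0] at hstep
    simp_rw [Finset.sum_cons, add_comm (X i _)]
    nlinarith [sq_nonneg (∫ ω, ‖X i ω‖ ^ 2 ∂P)]

end HilbertMoments

section Independence

variable {Ω ι κ α β : Type*} [MeasurableSpace Ω] {P : Measure Ω}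
  [MeasurableSpace α] [MeasurableSpace β]

lemma indepFun_of_notMem {X : ι → Ω → α} (hind : iIndepFun X P) (hX : ∀ i, Measurable (X i))
    {k : ι} {F : Finset ι} (hk : k ∉ F) : IndepFun (X k) (fun ω (i : F) ↦ X i ω) P :=
  (hind.indepFun_finset {k} F (Finset.disjoint_singleton_left.2 hk) hX).comp
    (φ := fun x : ({k} : Finset ι) → α ↦ x ⟨k, Finset.mem_singleton_self k⟩) (by fun_prop)
    measurable_id

variable [IsProbabilityMeasure P]

lemma integral_sq_sum_sub_mean_le {Z : ι → Ω → ℝ} {m B : ℝ} (hind : iIndepFun Z P)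
    (hZ : ∀ i, Measurable (Z i)) (hL : ∀ i, MemLp (Z i) 2 P) (hmean : ∀ i, ∫ ω, Z i ω ∂P = m)
    (hB : ∀ i, ∫ ω, Z i ω ^ 2 ∂P ≤ B) (s : Finset ι) :
    ∫ ω, (∑ i ∈ s, (Z i ω - m)) ^ 2 ∂P ≤ s.card * B := by
  have hcentred := integral_norm_sum_sq_of_iIndepFun
    (hind.comp (fun _ z ↦ z - m) fun _ ↦ measurable_id.sub_const m) (fun i ↦ (hZ i).sub_const m)
    (fun i ↦ (hL i).sub (memLp_const m)) (fun i ↦ ?_) s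
  · simp only [Real.norm_eq_abs, sq_abs, Function.comp_apply] at hcentred
    rw [hcentred, ← nsmul_eq_mul]
    refine Finset.sum_le_card_nsmul s _ B fun i _ ↦ ?_
    calc ∫ ω, (Z i ω - m) ^ 2 ∂P = Var[Z i; P] := by
          rw [variance_eq_integral (hZ i).aemeasurable, hmean i]
      _ ≤ ∫ ω, Z i ω ^ 2 ∂P := variance_le_expectation_sq (hZ i).aestronglyMeasurable
      _ ≤ B := hB i
  · change ∫ ω, (Z i ω - m) ∂P = 0
    rw [integral_sub ((hL i).integrable one_le_two) (integrable_const m), hmean i, integral_const,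
      probReal_univ, one_smul, sub_self]

lemma integral_comp_le_of_indepFun {V : Ω → α} {W : Ω → β} (hVW : IndepFun V W P)
    (hV : Measurable V) (hW : Measurable W) {f : α → β → ℝ} {b : α → ℝ}
    (hf : Measurable (Function.uncurry f)) (hb : Measurable b)
    (hfi : Integrable (fun ω ↦ f (V ω) (W ω)) P) (hbi : Integrable (fun ω ↦ b (V ω)) P)
    (hle : ∀ v, ∫ ω, f v (W ω) ∂P ≤ b v) :
    ∫ ω, f (V ω) (W ω) ∂P ≤ ∫ ω, b (V ω) ∂P := by
  have : IsProbabilityMeasure (P.map W) := Measure.isProbabilityMeasure_map hW.aemeasurable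
  have hlaw := hVW.map_prod_eq_prod_map_map hV.aemeasurable hW.aemeasurable
  have hfi' : Integrable (Function.uncurry f) ((P.map V).prod (P.map W)) := by
    rw [← hlaw]
    exact (integrable_map_measure hf.aestronglyMeasurable (hV.prodMk hW).aemeasurable).2 hfi
  calc ∫ ω, f (V ω) (W ω) ∂P = ∫ p, Function.uncurry f p ∂((P.map V).prod (P.map W)) := by
        rw [← hlaw, integral_map (hV.prodMk hW).aemeasurable hf.aestronglyMeasurable]
        rfl
    _ = ∫ v, ∫ w, f v w ∂(P.map W) ∂(P.map V) := integral_prod _ hfi'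
    _ ≤ ∫ v, b v ∂(P.map V) := by
        refine integral_mono hfi'.integral_prod_left
          ((integrable_map_measure hb.aestronglyMeasurable hV.aemeasurable).2 hbi) fun v ↦ ?_
        rw [integral_map hW.aemeasurable hf.of_uncurry_left.aestronglyMeasurable]
        exact hle v
    _ = ∫ ω, b (V ω) ∂P := integral_map hV.aemeasurable hb.aestronglyMeasurable

lemma iIndepFun_curry {X : ι × κ → Ω → α} (hX : ∀ p, Measurable (X p)) (hind : iIndepFun X P) :
    iIndepFun (fun i ω j ↦ X (i, j) ω) P := by
  have hprob (p : ι × κ) : IsProbabilityMeasure (P.map (X p)) :=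
    Measure.isProbabilityMeasure_map (hX p).aemeasurable
  have hrow (i : ι) : P.map (fun ω j ↦ X (i, j) ω)
      = Measure.infinitePi fun j ↦ P.map (X (i, j)) :=
    (hind.precomp (Prod.mk_right_injective i)).map_fun_eq_infinitePi_map fun j ↦ hX (i, j)
  rw [iIndepFun_iff_map_fun_eq_infinitePi_map fun i ↦ measurable_pi_lambda _ fun j ↦ hX (i, j)]
  calc P.map (fun ω i j ↦ X (i, j) ω)
      = (P.map fun ω p ↦ X p ω).map (MeasurableEquiv.curry ι κ α) := by
        rw [Measure.map_map (MeasurableEquiv.measurable _) (measurable_pi_lambda _ hX)]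
        rfl
    _ = (Measure.infinitePi fun p ↦ P.map (X p)).map (MeasurableEquiv.curry ι κ α) := by
        rw [hind.map_fun_eq_infinitePi_map hX]
    _ = Measure.infinitePi fun i ↦ Measure.infinitePi fun j ↦ P.map (X (i, j)) :=
        Measure.infinitePi_map_curry fun i j ↦ P.map (X (i, j))
    _ = Measure.infinitePi fun i ↦ P.map fun ω j ↦ X (i, j) ω := by simp_rw [hrow]

end Independence

/-- The squared Euclidean norm `‖v‖²` of the coordinates of `v` indexed by `s`. -/
noncomputable def energy {κ : Type*} (s : Finset κ) (v : κ → ℂ) : ℝ := ∑ j ∈ s, ‖v j‖ ^ 2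

/-- The product `vᵀ w^*` of the coordinates of `v` and `w` indexed by `s`. The conjugate falls on
the second argument, as in the paper. -/
noncomputable def correlation {κ : Type*} (s : Finset κ) (v w : κ → ℂ) : ℂ :=
  ∑ j ∈ s, v j * (starRingEnd ℂ) (w j)

/-- An independent family of centred complex random variables with unit second absolute moment
whose fourth absolute moments are at most `K`. It models the channel entries; Gaussian entries are
one instance (`IsStdComplexGaussianFamily.isIndepStandardized`). -/
structure IsIndepStandardized {Ω ι : Type*} [MeasurableSpace Ω] (P : Measure Ω) (K : ℝ)
    (g : ι → Ω → ℂ) : Prop where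
  measurable (i : ι) : Measurable (g i)
  iIndepFun : iIndepFun g P
  memLp_four (i : ι) : MemLp (g i) 4 P
  integral_eq_zero (i : ι) : ∫ ω, g i ω ∂P = 0
  integral_norm_sq (i : ι) : ∫ ω, ‖g i ω‖ ^ 2 ∂P = 1
  integral_norm_pow_four_le (i : ι) : ∫ ω, ‖g i ω‖ ^ 4 ∂P ≤ K

section Correlation

variable {κ : Type*} {s : Finset κ}

lemma energy_nonneg (s : Finset κ) (v : κ → ℂ) : 0 ≤ energy s v :=
  Finset.sum_nonneg fun _ _ ↦ sq_nonneg _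

lemma measurable_energy (s : Finset κ) : Measurable (energy s) := by
  unfold energy
  fun_prop

lemma measurable_correlation (s : Finset κ) : Measurable (Function.uncurry (correlation s)) := by
  unfold correlation Function.uncurry
  fun_prop

lemma norm_correlation_sq_le (s : Finset κ) (v w : κ → ℂ) :
    ‖correlation s v w‖ ^ 2 ≤ energy s v * energy s w :=
  calc ‖correlation s v w‖ ^ 2 ≤ (∑ j ∈ s, ‖v j‖ * ‖w j‖) ^ 2 := by
        gcongr
        refine (norm_sum_le s _).trans_eq (Finset.sum_congr rfl fun j _ ↦ ?_)
        rw [norm_mul, RCLike.norm_conj]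
    _ ≤ energy s v * energy s w := Finset.sum_mul_sq_le_sq_mul_sq s _ _

end Correlation

namespace IsIndepStandardized

section Family

variable {Ω ι κ : Type*} [MeasurableSpace Ω] {P : Measure Ω} {K : ℝ}

lemma precomp {g : ι → Ω → ℂ} (hg : IsIndepStandardized P K g) {e : κ → ι}
    (he : Function.Injective e) : IsIndepStandardized P K fun j ↦ g (e j) where
  measurable j := hg.measurable (e j)
  iIndepFun := hg.iIndepFun.precomp he
  memLp_four j := hg.memLp_four (e j)
  integral_eq_zero j := hg.integral_eq_zero (e j)
  integral_norm_sq j := hg.integral_norm_sq (e j)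
  integral_norm_pow_four_le j := hg.integral_norm_pow_four_le (e j)

variable {g : κ → Ω → ℂ}

lemma memLp_norm_sq (hg : IsIndepStandardized P K g) (j : κ) :
    MemLp (fun ω ↦ ‖g j ω‖ ^ 2) 2 P := by
  refine (memLp_two_iff_integrable_sq ((hg.measurable j).norm.pow_const 2).aestronglyMeasurable).2
    ?_
  simpa only [← pow_mul] using (hg.memLp_four j).integrable_norm_pow four_ne_zero

lemma memLp_energy (hg : IsIndepStandardized P K g) (s : Finset κ) :
    MemLp (fun ω ↦ energy s (g · ω)) 2 P :=
  memLp_finsetSum s fun j _ ↦ hg.memLp_norm_sq j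

lemma memLp_energy_div_card (hg : IsIndepStandardized P K g) (s : Finset κ) :
    MemLp (fun ω ↦ energy s (g · ω) / s.card) 2 P := by
  simpa only [div_eq_mul_inv] using (hg.memLp_energy s).mul_const _

lemma integral_energy [IsFiniteMeasure P] (hg : IsIndepStandardized P K g) (s : Finset κ) :
    ∫ ω, energy s (g · ω) ∂P = s.card := by
  unfold energy
  rw [integral_finsetSum s fun j _ ↦ (hg.memLp_norm_sq j).integrable one_le_two]
  simp [hg.integral_norm_sq]

lemma memLp_correlation (hg : IsIndepStandardized P K g) (s : Finset κ) (v : κ → ℂ) :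
    MemLp (fun ω ↦ correlation s v (g · ω)) 4 P :=
  memLp_finsetSum s fun j _ ↦ (hg.memLp_four j).star.const_mul (v j)

lemma integral_mul_conj_eq_zero (hg : IsIndepStandardized P K g) (a : ℂ) (j : κ) :
    ∫ ω, a * (starRingEnd ℂ) (g j ω) ∂P = 0 := by
  rw [integral_const_mul, integral_conj, hg.integral_eq_zero j, map_zero, mul_zero]

variable [IsProbabilityMeasure P]

lemma integral_sq_energy_sub_card_le (hg : IsIndepStandardized P K g) (s : Finset κ) :
    ∫ ω, (energy s (g · ω) - s.card) ^ 2 ∂P ≤ s.card * K := by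
  have hsum := integral_sq_sum_sub_mean_le
    (hg.iIndepFun.comp (fun _ z ↦ ‖z‖ ^ 2) fun _ ↦ measurable_norm.pow_const 2)
    (fun j ↦ (hg.measurable j).norm.pow_const 2) hg.memLp_norm_sq hg.integral_norm_sq (B := K)
    (fun j ↦ by simpa only [Function.comp_apply, ← pow_mul] using hg.integral_norm_pow_four_le j) s
  simpa [energy] using hsum

lemma integral_norm_correlation_sq (hg : IsIndepStandardized P K g) (s : Finset κ) (v : κ → ℂ) :
    ∫ ω, ‖correlation s v (g · ω)‖ ^ 2 ∂P = energy s v := by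
  have hsum := integral_norm_sum_sq_of_iIndepFun
    (hg.iIndepFun.comp (fun j z ↦ v j * (starRingEnd ℂ) z) fun j ↦ by fun_prop)
    (fun j ↦ by have := hg.measurable j; fun_prop)
    (fun j ↦ ((hg.memLp_four j).star.const_mul (v j)).mono_exponent (by norm_num))
    (fun j ↦ hg.integral_mul_conj_eq_zero (v j) j) s
  simpa [correlation, energy, mul_pow, integral_const_mul, hg.integral_norm_sq] using hsum

lemma integral_norm_correlation_pow_four_le (hg : IsIndepStandardized P K g) (s : Finset κ)
    (v : κ → ℂ) :
    ∫ ω, ‖correlation s v (g · ω)‖ ^ 4 ∂P ≤ (K + 3) * energy s v ^ 2 := by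
  have hsum := integral_norm_sum_pow_four_le_of_iIndepFun
    (hg.iIndepFun.comp (fun j z ↦ v j * (starRingEnd ℂ) z) fun j ↦ by fun_prop)
    (fun j ↦ by have := hg.measurable j; fun_prop)
    (fun j ↦ (hg.memLp_four j).star.const_mul (v j))
    (fun j ↦ hg.integral_mul_conj_eq_zero (v j) j) s
  have hfourth : ∑ j ∈ s, ‖v j‖ ^ 4 * ∫ ω, ‖g j ω‖ ^ 4 ∂P ≤ K * energy s v ^ 2 := by
    obtain rfl | ⟨j₀, -⟩ := s.eq_empty_or_nonempty
    · simp [energy]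
    have hK : 0 ≤ K :=
      (integral_nonneg fun ω ↦ by positivity).trans (hg.integral_norm_pow_four_le j₀)
    calc ∑ j ∈ s, ‖v j‖ ^ 4 * ∫ ω, ‖g j ω‖ ^ 4 ∂P ≤ ∑ j ∈ s, (‖v j‖ ^ 2) ^ 2 * K := by
          simp_rw [← pow_mul]
          gcongr with j
          exact hg.integral_norm_pow_four_le j
      _ = K * ∑ j ∈ s, (‖v j‖ ^ 2) ^ 2 := by rw [Finset.mul_sum]; simp_rw [mul_comm K]
      _ ≤ K * energy s v ^ 2 := by
          gcongr
          exact Finset.sum_sq_le_sq_sum_of_nonneg fun j _ ↦ sq_nonneg ‖v j‖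
  simp only [Function.comp_apply, norm_mul, RCLike.norm_conj, mul_pow, integral_const_mul,
    hg.integral_norm_sq, mul_one] at hsum
  calc _ ≤ _ := hsum
    _ ≤ K * energy s v ^ 2 + 3 * energy s v ^ 2 := by gcongr; exact le_rfl
    _ = (K + 3) * energy s v ^ 2 := by ring

end Family

section Array

variable {Ω ι κ : Type*} [MeasurableSpace Ω] {P : Measure Ω} {K : ℝ}
  {g : ι × κ → Ω → ℂ}

lemma row (hg : IsIndepStandardized P K g) (i : ι) :
    IsIndepStandardized P K fun j ↦ g (i, j) :=
  hg.precomp (Prod.mk_right_injective i)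

lemma measurable_row (hg : IsIndepStandardized P K g) (i : ι) :
    Measurable fun ω j ↦ g (i, j) ω :=
  measurable_pi_lambda _ fun j ↦ hg.measurable (i, j)

variable [IsProbabilityMeasure P]

lemma iIndepFun_rows (hg : IsIndepStandardized P K g) :
    ProbabilityTheory.iIndepFun (fun i ω j ↦ g (i, j) ω) P :=
  iIndepFun_curry hg.measurable hg.iIndepFun

lemma integral_abs_sum_norm_correlation_sq_sub_energy_le (hg : IsIndepStandardized P K g)
    (s : Finset κ) (F : Finset ι) (v : κ → ℂ) :
    ∫ ω, |∑ t ∈ F, (‖correlation s v fun j ↦ g (t, j) ω‖ ^ 2 - energy s v)| ∂P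
      ≤ √(F.card * (K + 3)) * energy s v := by
  have hcorr : Measurable (correlation s v) := (measurable_correlation s).of_uncurry_left
  have hZm (t : ι) : Measurable fun ω ↦ ‖correlation s v fun j ↦ g (t, j) ω‖ ^ 2 :=
    (hcorr.comp (hg.measurable_row t)).norm.pow_const 2
  have hZ4 (t : ι) : ∫ ω, (‖correlation s v fun j ↦ g (t, j) ω‖ ^ 2) ^ 2 ∂P
      ≤ (K + 3) * energy s v ^ 2 := by
    simpa only [← pow_mul] using (hg.row t).integral_norm_correlation_pow_four_le s v
  have hZL (t : ι) : MemLp (fun ω ↦ ‖correlation s v fun j ↦ g (t, j) ω‖ ^ 2) 2 P := by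
    refine (memLp_two_iff_integrable_sq (hZm t).aestronglyMeasurable).2 ?_
    simpa only [← pow_mul] using
      ((hg.row t).memLp_correlation s v).integrable_norm_pow four_ne_zero
  have hsq := integral_sq_sum_sub_mean_le
    (hg.iIndepFun_rows.comp (fun _ w ↦ ‖correlation s v w‖ ^ 2) fun _ ↦ hcorr.norm.pow_const 2)
    hZm hZL (fun t ↦ (hg.row t).integral_norm_correlation_sq s v) hZ4 F
  calc _ ≤ √(∫ ω, (∑ t ∈ F, (‖correlation s v fun j ↦ g (t, j) ω‖ ^ 2 - energy s v)) ^ 2 ∂P) :=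
        integral_abs_le_sqrt_integral_sq
          (memLp_finsetSum F fun t _ ↦ (hZL t).sub (memLp_const _))
    _ ≤ √(F.card * ((K + 3) * energy s v ^ 2)) := Real.sqrt_le_sqrt hsq
    _ = √(F.card * (K + 3)) * energy s v := by
        rw [← mul_assoc, Real.sqrt_mul' _ (sq_nonneg _), Real.sqrt_sq (energy_nonneg s v)]

lemma integrable_norm_correlation_sq (hg : IsIndepStandardized P K g) (s : Finset κ) {k t : ι}
    (hkt : k ≠ t) :
    Integrable (fun ω ↦ ‖correlation s (fun j ↦ g (k, j) ω) fun j ↦ g (t, j) ω‖ ^ 2) P := by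
  have hind : IndepFun (fun ω ↦ energy s fun j ↦ g (k, j) ω)
      (fun ω ↦ energy s fun j ↦ g (t, j) ω) P :=
    (hg.iIndepFun_rows.indepFun hkt).comp (measurable_energy s) (measurable_energy s)
  refine (hind.integrable_mul (((hg.row k).memLp_energy s).integrable one_le_two)
    (((hg.row t).memLp_energy s).integrable one_le_two)).mono' ?_ (.of_forall fun ω ↦ ?_)
  · exact (((measurable_correlation s).comp
      ((hg.measurable_row k).prodMk (hg.measurable_row t))).norm.pow_const 2).aestronglyMeasurable
  · rw [Real.norm_of_nonneg (sq_nonneg _)]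
    exact norm_correlation_sq_le s _ _

lemma integrable_sum_norm_correlation_sq (hg : IsIndepStandardized P K g) (s : Finset κ)
    {F : Finset ι} {k : ι} (hk : k ∉ F) :
    Integrable (fun ω ↦ ∑ t ∈ F,
      ‖correlation s (fun j ↦ g (k, j) ω) fun j ↦ g (t, j) ω‖ ^ 2) P :=
  integrable_finsetSum F fun _ ht ↦
    hg.integrable_norm_correlation_sq s (ne_of_mem_of_not_mem ht hk).symm

theorem integral_abs_sum_norm_correlation_sq_sub_energy_row_le (hg : IsIndepStandardized P K g)
    (s : Finset κ) {F : Finset ι} {k : ι} (hk : k ∉ F) :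
    ∫ ω, |∑ t ∈ F, (‖correlation s (fun j ↦ g (k, j) ω) fun j ↦ g (t, j) ω‖ ^ 2
        - energy s fun j ↦ g (k, j) ω)| ∂P ≤ √(F.card * (K + 3)) * s.card := by
  have henergy := ((hg.row k).memLp_energy s).integrable one_le_two
  have hcorr (t : F) : Measurable fun p : (κ → ℂ) × (F → κ → ℂ) ↦ correlation s p.1 (p.2 t) :=
    (measurable_correlation s).comp
      (measurable_fst.prodMk ((measurable_pi_apply t).comp measurable_snd))
  rw [← (hg.row k).integral_energy s, ← integral_const_mul]
  simp_rw [← Finset.sum_coe_sort F]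
  refine integral_comp_le_of_indepFun (V := fun ω j ↦ g (k, j) ω)
    (W := fun ω (t : F) j ↦ g (t, j) ω)
    (f := fun v w ↦ |∑ t : F, (‖correlation s v (w t)‖ ^ 2 - energy s v)|)
    (b := fun v ↦ √(F.card * (K + 3)) * energy s v)
    (indepFun_of_notMem hg.iIndepFun_rows hg.measurable_row hk) (hg.measurable_row k)
    (measurable_pi_lambda _ fun t ↦ hg.measurable_row t) ?_ ((measurable_energy s).const_mul _) ?_
    (henergy.const_mul _) fun v ↦ ?_
  · have := measurable_energy s
    unfold Function.uncurry
    fun_prop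
  · refine (integrable_finsetSum _ fun t _ ↦ ?_).abs
    exact (hg.integrable_norm_correlation_sq s (ne_of_mem_of_not_mem t.2 hk).symm).sub henergy
  · simpa only [← Finset.sum_coe_sort F] using
      hg.integral_abs_sum_norm_correlation_sq_sub_energy_le s F v

lemma integral_abs_mean_norm_correlation_sq_sub_one_le (hg : IsIndepStandardized P K g)
    {s : Finset κ} (hs : s.Nonempty) {F : Finset ι} (hF : F.Nonempty) {k : ι} (hk : k ∉ F) :
    ∫ ω, |(∑ t ∈ F, ‖correlation s (fun j ↦ g (k, j) ω) fun j ↦ g (t, j) ω‖ ^ 2)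
        / (F.card * s.card) - 1| ∂P
      ≤ √((K + 3) / F.card) + ∫ ω, |energy s (fun j ↦ g (k, j) ω) / s.card - 1| ∂P := by
  have hs0 : (0 : ℝ) < s.card := by exact_mod_cast hs.card_pos
  have hF0 : (0 : ℝ) < F.card := by exact_mod_cast hF.card_pos
  set S : Ω → ℝ := fun ω ↦ energy s (fun j ↦ g (k, j) ω) / s.card with hS
  set D : Ω → ℝ := fun ω ↦ ∑ t ∈ F, (‖correlation s (fun j ↦ g (k, j) ω) fun j ↦ g (t, j) ω‖ ^ 2
    - energy s fun j ↦ g (k, j) ω) with hD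
  have henergy := ((hg.row k).memLp_energy s).integrable one_le_two
  have hSi : Integrable (fun ω ↦ |S ω - 1|) P :=
    ((henergy.div_const _).sub (integrable_const 1)).abs
  have hDi : Integrable (fun ω ↦ |D ω| / (F.card * s.card)) P :=
    (integrable_finsetSum _ fun t ht ↦ (hg.integrable_norm_correlation_sq s
      (ne_of_mem_of_not_mem ht hk).symm).sub henergy).abs.div_const _
  have hsplit (ω : Ω) : (∑ t ∈ F, ‖correlation s (fun j ↦ g (k, j) ω) fun j ↦ g (t, j) ω‖ ^ 2)
      / (F.card * s.card) - 1 = D ω / (F.card * s.card) + (S ω - 1) := by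
    simp only [hD, hS, Finset.sum_sub_distrib, Finset.sum_const, nsmul_eq_mul]
    field_simp
    ring
  calc _ ≤ ∫ ω, (|D ω| / (F.card * s.card) + |S ω - 1|) ∂P := by
        refine integral_mono_of_nonneg (.of_forall fun ω ↦ abs_nonneg _) (hDi.add hSi)
          (.of_forall fun ω ↦ ?_)
        simpa only [hsplit, abs_div, abs_of_pos (mul_pos hF0 hs0)] using
          abs_add_le (D ω / (F.card * s.card)) (S ω - 1)
    _ = (∫ ω, |D ω| ∂P) / (F.card * s.card) + ∫ ω, |S ω - 1| ∂P := by
        rw [integral_add hDi hSi, integral_div]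
    _ ≤ √(F.card * (K + 3)) * s.card / (F.card * s.card) + ∫ ω, |S ω - 1| ∂P := by
        gcongr
        exact hg.integral_abs_sum_norm_correlation_sq_sub_energy_row_le s hk
    _ = √((K + 3) / F.card) + ∫ ω, |S ω - 1| ∂P := by
        rw [mul_div_mul_right _ _ hs0.ne', Real.sqrt_mul hF0.le, Real.sqrt_div' _ hF0.le,
          mul_div_right_comm, Real.sqrt_div_self', one_div_mul_eq_div]

end Array

section Limits

variable {Ω ι κ α : Type*} [MeasurableSpace Ω] {P : Measure Ω} [IsProbabilityMeasure P] {K : ℝ}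
  {f : Filter α} {s : α → Finset κ} {F : α → Finset ι}

lemma tendsto_integral_sq_energy_div_card_sub_one {g : κ → Ω → ℂ}
    (hg : IsIndepStandardized P K g) (hs : Tendsto (fun a ↦ ((s a).card : ℝ)) f atTop) :
    Tendsto (fun a ↦ ∫ ω, (energy (s a) (g · ω) / (s a).card - 1) ^ 2 ∂P) f (𝓝 0) := by
  refine squeeze_zero' (.of_forall fun a ↦ integral_nonneg fun ω ↦ sq_nonneg _) ?_
    (hs.const_div_atTop K)
  filter_upwards [hs.eventually_gt_atTop 0] with a ha
  calc ∫ ω, (energy (s a) (g · ω) / (s a).card - 1) ^ 2 ∂P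
      = (∫ ω, (energy (s a) (g · ω) - (s a).card) ^ 2 ∂P) / (s a).card ^ 2 := by
        rw [← integral_div]
        congr with ω
        field_simp
    _ ≤ (s a).card * K / (s a).card ^ 2 := by
        gcongr
        exact hg.integral_sq_energy_sub_card_le (s a)
    _ = K / (s a).card := by field_simp

variable {g : ι × κ → Ω → ℂ} {k : ι}

theorem tendsto_integral_abs_mean_norm_correlation_sq_sub_one (hg : IsIndepStandardized P K g)
    (hs : Tendsto (fun a ↦ ((s a).card : ℝ)) f atTop)
    (hF : Tendsto (fun a ↦ ((F a).card : ℝ)) f atTop) (hk : ∀ a, k ∉ F a) :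
    Tendsto (fun a ↦ ∫ ω, |(∑ t ∈ F a,
        ‖correlation (s a) (fun j ↦ g (k, j) ω) fun j ↦ g (t, j) ω‖ ^ 2)
          / ((F a).card * (s a).card) - 1| ∂P) f (𝓝 0) := by
  have hlim : Tendsto (fun a ↦ √((K + 3) / (F a).card)
      + ∫ ω, |energy (s a) (fun j ↦ g (k, j) ω) / (s a).card - 1| ∂P) f (𝓝 0) := by
    simpa using (hF.const_div_atTop (K + 3)).sqrt.add (tendsto_integral_abs_sub_of_sq
      (fun a ↦ (hg.row k).memLp_energy_div_card (s a))
      ((hg.row k).tendsto_integral_sq_energy_div_card_sub_one hs))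
  refine squeeze_zero' (.of_forall fun a ↦ integral_nonneg fun ω ↦ abs_nonneg _) ?_ hlim
  filter_upwards [hs.eventually_gt_atTop 0, hF.eventually_gt_atTop 0] with a hsa hFa
  exact hg.integral_abs_mean_norm_correlation_sq_sub_one_le
    (Finset.card_pos.1 (by exact_mod_cast hsa)) (Finset.card_pos.1 (by exact_mod_cast hFa)) (hk a)

lemma tendsto_integral_abs_mul_energy_sq_sub {g : κ → Ω → ℂ} {w : α → ℝ} {x : ℝ}
    (hg : IsIndepStandardized P K g) (hs : Tendsto (fun a ↦ ((s a).card : ℝ)) f atTop)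
    (hw : Tendsto (fun a ↦ w a * (s a).card ^ 2) f (𝓝 x)) :
    Tendsto (fun a ↦ ∫ ω, |w a * energy (s a) (g · ω) ^ 2 - x| ∂P) f (𝓝 0) := by
  have hL2 (a : α) := hg.memLp_energy_div_card (s a)
  refine (tendsto_integral_abs_mul_sub (fun a ↦ (hL2 a).integrable_sq) hw
    (tendsto_integral_abs_sq_sub_sq hL2 (hg.tendsto_integral_sq_energy_div_card_sub_one hs))).congr'
    ?_
  filter_upwards [hs.eventually_gt_atTop 0] with a ha
  congr with ω
  field_simp

lemma tendsto_integral_abs_mul_sum_norm_correlation_sq_sub {w : α → ℝ} {y : ℝ}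
    (hg : IsIndepStandardized P K g) (hs : Tendsto (fun a ↦ ((s a).card : ℝ)) f atTop)
    (hF : Tendsto (fun a ↦ ((F a).card : ℝ)) f atTop) (hk : ∀ a, k ∉ F a)
    (hw : Tendsto (fun a ↦ w a * ((F a).card * (s a).card)) f (𝓝 y)) :
    Tendsto (fun a ↦ ∫ ω, |w a * ∑ t ∈ F a,
      ‖correlation (s a) (fun j ↦ g (k, j) ω) fun j ↦ g (t, j) ω‖ ^ 2 - y| ∂P) f (𝓝 0) := by
  have hmean (a : α) := (hg.integrable_sum_norm_correlation_sq (s a) (hk a)).div_const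
    ((F a).card * (s a).card : ℝ)
  refine (tendsto_integral_abs_mul_sub hmean hw
    (hg.tendsto_integral_abs_mean_norm_correlation_sq_sub_one hs hF hk)).congr' ?_
  filter_upwards [hs.eventually_gt_atTop 0, hF.eventually_gt_atTop 0] with a hsa hFa
  congr with ω
  field_simp

theorem tendsto_integral_log_one_add_energy_sq_div {w : α → ℝ} {x y : ℝ}
    (hg : IsIndepStandardized P K g) (hs : Tendsto (fun a ↦ ((s a).card : ℝ)) f atTop)
    (hF : Tendsto (fun a ↦ ((F a).card : ℝ)) f atTop) (hk : ∀ a, k ∉ F a)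
    (hw : ∀ a, 0 ≤ w a) (hx : 0 ≤ x) (hy : 0 ≤ y)
    (hwx : Tendsto (fun a ↦ w a * (s a).card ^ 2) f (𝓝 x))
    (hwy : Tendsto (fun a ↦ w a * ((F a).card * (s a).card)) f (𝓝 y)) :
    Tendsto (fun a ↦ ∫ ω, Real.log (1 + w a * energy (s a) (fun j ↦ g (k, j) ω) ^ 2 /
        (1 + w a * ∑ t ∈ F a,
          ‖correlation (s a) (fun j ↦ g (k, j) ω) fun j ↦ g (t, j) ω‖ ^ 2)) ∂P)
      f (𝓝 (Real.log (1 + x / (1 + y)))) := by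
  refine tendsto_integral_log_one_add_div
    (fun a ↦ ((hg.row k).memLp_energy (s a)).integrable_sq.const_mul _)
    (fun a ↦ (integrable_const 1).add
      ((hg.integrable_sum_norm_correlation_sq (s a) (hk a)).const_mul _))
    (fun a ω ↦ mul_nonneg (hw a) (sq_nonneg _))
    (fun a ω ↦ le_add_of_nonneg_right (mul_nonneg (hw a) (by positivity)))
    hx (le_add_of_nonneg_right hy)
    ((hg.row k).tendsto_integral_abs_mul_energy_sq_sub hs hwx) ?_
  simpa only [add_sub_add_left_eq_sub] using
    hg.tendsto_integral_abs_mul_sum_norm_correlation_sq_sub hs hF hk hwy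

end Limits

end IsIndepStandardized

section Gaussian

variable {Ω ι : Type*} [MeasurableSpace Ω] {P : Measure Ω}

lemma memLp_of_hasLaw_gaussianReal {X : Ω → ℝ} {m : ℝ} {v : ℝ≥0}
    (hX : HasLaw X (gaussianReal m v) P) {p : ENNReal} (hp : p ≠ ⊤) : MemLp X p P := by
  have hid := memLp_id_gaussianReal' (μ := m) (v := v) p hp
  rw [← hX.map_eq] at hid
  exact hid.comp_of_map hX.aemeasurable

lemma integral_sq_of_hasLaw_gaussianReal_zero {X : Ω → ℝ} {v : ℝ≥0}
    (hX : HasLaw X (gaussianReal 0 v) P) : ∫ ω, X ω ^ 2 ∂P = v := by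
  rw [← variance_id_gaussianReal (μ := 0) (v := v), ← hX.variance_eq,
    variance_of_integral_eq_zero hX.aemeasurable
      (by rw [hX.integral_eq, integral_id_gaussianReal])]

lemma norm_pow_four_le_re_add_im (z : ℂ) : ‖z‖ ^ 4 ≤ 2 * (z.re ^ 4 + z.im ^ 4) := by
  have hz : ‖z‖ ^ 2 = z.re ^ 2 + z.im ^ 2 := by
    rw [Complex.sq_norm, Complex.normSq_apply, ← sq, ← sq]
  calc ‖z‖ ^ 4 = (z.re ^ 2 + z.im ^ 2) ^ 2 := by rw [← hz, ← pow_mul]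
    _ ≤ 2 * ((z.re ^ 2) ^ 2 + (z.im ^ 2) ^ 2) := add_sq_le
    _ = 2 * (z.re ^ 4 + z.im ^ 4) := by ring

namespace IsStdComplexGaussianFamily

variable {g : ι → Ω → ℂ}

lemma hasLaw_re (hg : IsStdComplexGaussianFamily P g) {i : ι} (hi : Measurable (g i)) :
    HasLaw (fun ω ↦ (g i ω).re) (gaussianReal 0 (1 / 2)) P :=
  ⟨(Complex.measurable_re.comp hi).aemeasurable, by simpa using hg.2 (i, true)⟩

lemma hasLaw_im (hg : IsStdComplexGaussianFamily P g) {i : ι} (hi : Measurable (g i)) :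
    HasLaw (fun ω ↦ (g i ω).im) (gaussianReal 0 (1 / 2)) P :=
  ⟨(Complex.measurable_im.comp hi).aemeasurable, by simpa using hg.2 (i, false)⟩

lemma memLp (hg : IsStdComplexGaussianFamily P g) {i : ι} (hi : Measurable (g i)) {p : ENNReal}
    (hp : p ≠ ⊤) : MemLp (g i) p P :=
  memLp_re_im_iff.1 ⟨memLp_of_hasLaw_gaussianReal (hg.hasLaw_re hi) hp,
    memLp_of_hasLaw_gaussianReal (hg.hasLaw_im hi) hp⟩

lemma iIndepFun [IsProbabilityMeasure P] (hg : IsStdComplexGaussianFamily P g)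
    (hm : ∀ i, Measurable (g i)) : ProbabilityTheory.iIndepFun g P := by
  have hparts (p : ι × Bool) :
      Measurable fun ω ↦ if p.2 then (g p.1 ω).re else (g p.1 ω).im := by
    obtain ⟨i, _ | _⟩ := p
    exacts [Complex.measurable_im.comp (hm i), Complex.measurable_re.comp (hm i)]
  have hmk : Measurable fun x : Bool → ℝ ↦
      Complex.measurableEquivRealProd.symm (x true, x false) := by
    fun_prop
  exact (iIndepFun_curry hparts hg.1).comp _ fun _ ↦ hmk

lemma integral_eq_zero [IsFiniteMeasure P] (hg : IsStdComplexGaussianFamily P g) {i : ι}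
    (hi : Measurable (g i)) : ∫ ω, g i ω ∂P = 0 := by
  rw [← integral_re_add_im ((hg.memLp hi (p := 1) ENNReal.one_ne_top).integrable le_rfl)]
  simp [(hg.hasLaw_re hi).integral_eq, (hg.hasLaw_im hi).integral_eq]

lemma integral_norm_sq (hg : IsStdComplexGaussianFamily P g) {i : ι} (hi : Measurable (g i)) :
    ∫ ω, ‖g i ω‖ ^ 2 ∂P = 1 := by
  have hre := hg.hasLaw_re hi
  have him := hg.hasLaw_im hi
  simp only [Complex.sq_norm, Complex.normSq_apply, ← sq]
  rw [integral_add (memLp_of_hasLaw_gaussianReal hre ENNReal.ofNat_ne_top).integrable_sq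
    (memLp_of_hasLaw_gaussianReal him ENNReal.ofNat_ne_top).integrable_sq,
    integral_sq_of_hasLaw_gaussianReal_zero hre, integral_sq_of_hasLaw_gaussianReal_zero him]
  norm_num

lemma integral_norm_pow_four_le (hg : IsStdComplexGaussianFamily P g) {i : ι}
    (hi : Measurable (g i)) :
    ∫ ω, ‖g i ω‖ ^ 4 ∂P ≤ 4 * ∫ x, x ^ 4 ∂(gaussianReal 0 (1 / 2)) := by
  have hfourthInt {X : Ω → ℝ} (hX : HasLaw X (gaussianReal 0 (1 / 2)) P) :
      Integrable (fun ω ↦ X ω ^ 4) P := by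
    simpa only [Real.norm_eq_abs, Nat.even_iff, Even.pow_abs (by decide : Even 4)] using
      (memLp_of_hasLaw_gaussianReal hX (p := 4) ENNReal.ofNat_ne_top).integrable_norm_pow
        four_ne_zero
  have hfourth {X : Ω → ℝ} (hX : HasLaw X (gaussianReal 0 (1 / 2)) P) :
      ∫ ω, X ω ^ 4 ∂P = ∫ x, x ^ 4 ∂(gaussianReal 0 (1 / 2)) :=
    hX.integral_comp (f := fun x ↦ x ^ 4) (by fun_prop)
  have hre := hg.hasLaw_re hi
  have him := hg.hasLaw_im hi
  calc ∫ ω, ‖g i ω‖ ^ 4 ∂P ≤ ∫ ω, 2 * ((g i ω).re ^ 4 + (g i ω).im ^ 4) ∂P :=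
        integral_mono_of_nonneg (.of_forall fun ω ↦ by positivity)
          (((hfourthInt hre).add (hfourthInt him)).const_mul 2)
          (.of_forall fun ω ↦ norm_pow_four_le_re_add_im (g i ω))
    _ = 4 * ∫ x, x ^ 4 ∂(gaussianReal 0 (1 / 2)) := by
        rw [integral_const_mul, integral_add (hfourthInt hre) (hfourthInt him), hfourth hre,
          hfourth him]
        ring

lemma isIndepStandardized [IsProbabilityMeasure P] (hg : IsStdComplexGaussianFamily P g)
    (hm : ∀ i, Measurable (g i)) :
    IsIndepStandardized P (4 * ∫ x, x ^ 4 ∂(gaussianReal 0 (1 / 2))) g where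
  measurable := hm
  iIndepFun := hg.iIndepFun hm
  memLp_four i := hg.memLp (hm i) ENNReal.ofNat_ne_top
  integral_eq_zero i := hg.integral_eq_zero (hm i)
  integral_norm_sq i := hg.integral_norm_sq (hm i)
  integral_norm_pow_four_le i := hg.integral_norm_pow_four_le (hm i)

end IsStdComplexGaussianFamily

end Gaussian

section Cardinality

lemma tendsto_atTop_of_tendsto_div_natCast {u : ℕ → ℝ} {c : ℝ} (hc : 0 < c)
    (hu : Tendsto (fun l : ℕ ↦ u l / l) atTop (𝓝 c)) : Tendsto u atTop atTop := by
  refine (hu.pos_mul_atTop hc tendsto_natCast_atTop_atTop).congr' ?_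
  filter_upwards [eventually_gt_atTop 0] with l hl
  field_simp

variable {α ι : Type*} [DecidableEq ι]

lemma card_sub_one_le_card_erase (s : Finset ι) (k : ι) :
    (s.card : ℝ) - 1 ≤ (s.erase k).card := by
  have hpred := Finset.pred_card_le_card_erase (s := s) (a := k)
  rw [tsub_le_iff_right] at hpred
  rw [sub_le_iff_le_add]
  exact_mod_cast hpred

variable {f : Filter α} {s : α → Finset ι}

lemma tendsto_card_erase_atTop (hs : Tendsto (fun a ↦ ((s a).card : ℝ)) f atTop) (k : ι) :
    Tendsto (fun a ↦ (((s a).erase k).card : ℝ)) f atTop :=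
  tendsto_atTop_mono (fun a ↦ card_sub_one_le_card_erase (s a) k)
    (tendsto_atTop_add_const_right f (-1) hs)

lemma tendsto_card_erase_div_card (hs : Tendsto (fun a ↦ ((s a).card : ℝ)) f atTop) (k : ι) :
    Tendsto (fun a ↦ (((s a).erase k).card : ℝ) / (s a).card) f (𝓝 1) := by
  refine tendsto_of_tendsto_of_tendsto_of_le_of_le' (g := fun a ↦ 1 - 1 / ((s a).card : ℝ))
    (by simpa using (hs.const_div_atTop 1).const_sub 1) tendsto_const_nhds ?_
    (.of_forall fun a ↦ ?_)
  · filter_upwards [hs.eventually_gt_atTop 0] with a ha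
    rw [one_sub_div ha.ne']
    gcongr
    exact card_sub_one_le_card_erase (s a) k
  · exact div_le_one_of_le₀ (by exact_mod_cast Finset.card_erase_le) (Nat.cast_nonneg _)

end Cardinality

theorem stmt_0_general {Ω : Type*} [MeasurableSpace Ω] (P : Measure Ω) [IsProbabilityMeasure P]
    {K : ℝ} (Pt : ℝ) (hPt : 0 ≤ Pt) (G : ℝ) (hG : 0 < G) (c : ℝ) (hc : 0 < c) (QL : ℕ → ℕ)
    (hQL : Tendsto (fun l : ℕ ↦ (QL l : ℝ) / l) atTop (𝓝 c))
    (g : ℕ → ℕ → Ω → ℂ) (hg : IsIndepStandardized P K fun p : ℕ × ℕ ↦ g p.1 p.2) (k : ℕ) :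
    let X : ℕ → Ω → ℝ := fun l ω =>
      Pt / (G * QL l * l) * (∑ j ∈ Finset.range l, Complex.normSq (g k j ω)) ^ 2
    let Y : ℕ → Ω → ℝ := fun l ω =>
      1 + Pt / (G * QL l * l) *
        ∑ ϑ ∈ (Finset.range (QL l)).filter (fun ϑ => ϑ ≠ k),
          Complex.normSq (∑ j ∈ Finset.range l, g k j ω * (starRingEnd ℂ) (g ϑ j ω))
    Tendsto (fun l : ℕ => ∫ ω, Real.log (1 + X l ω / Y l ω) ∂P)
      atTop (𝓝 (Real.log (1 + 1 / c * (Pt / (Pt + G))))) ∧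
    Tendsto
      (fun l : ℕ => (c * G * l * ∫ ω, Real.log (1 + X l ω / Y l ω) ∂P) / (c * G * l))
      atTop (𝓝 (Real.log (1 + 1 / c * (Pt / (Pt + G))))) := by
  intro X Y
  have hl : Tendsto (fun l ↦ ((Finset.range l).card : ℝ)) atTop atTop := by
    simpa only [Finset.card_range] using tendsto_natCast_atTop_atTop (R := ℝ)
  have hQ : Tendsto (fun l ↦ ((Finset.range (QL l)).card : ℝ)) atTop atTop := by
    simpa only [Finset.card_range] using tendsto_atTop_of_tendsto_div_natCast hc hQL
  have hsignal : Tendsto (fun l ↦ Pt / (G * QL l * l) * ((Finset.range l).card : ℝ) ^ 2)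
      atTop (𝓝 (Pt / G * c⁻¹)) := by
    refine ((hQL.inv₀ hc.ne').const_mul (Pt / G)).congr' ?_
    filter_upwards [hl.eventually_gt_atTop 0, hQ.eventually_gt_atTop 0] with l hl0 hQ0
    simp only [Finset.card_range] at hl0 hQ0 ⊢
    field_simp
  have hinterference : Tendsto (fun l ↦ Pt / (G * QL l * l)
      * ((((Finset.range (QL l)).erase k).card : ℝ) * (Finset.range l).card))
      atTop (𝓝 (Pt / G)) := by
    rw [← mul_one (Pt / G)]
    refine ((tendsto_card_erase_div_card hQ k).const_mul (Pt / G)).congr' ?_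
    filter_upwards [hl.eventually_gt_atTop 0, hQ.eventually_gt_atTop 0] with l hl0 hQ0
    simp only [Finset.card_range] at hl0 hQ0 ⊢
    field_simp
  have hlimit : Tendsto (fun l : ℕ => ∫ ω, Real.log (1 + X l ω / Y l ω) ∂P)
      atTop (𝓝 (Real.log (1 + 1 / c * (Pt / (Pt + G))))) := by
    have hratio : 1 / c * (Pt / (Pt + G)) = Pt / G * c⁻¹ / (1 + Pt / G) := by
      field_simp
      ring
    simp only [X, Y, hratio, Complex.normSq_eq_norm_sq, Finset.filter_ne']
    exact hg.tendsto_integral_log_one_add_energy_sq_div hl (tendsto_card_erase_atTop hQ k)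
      (fun l ↦ Finset.notMem_erase k _) (fun l ↦ by positivity) (by positivity) (by positivity)
      hsignal hinterference
  refine ⟨hlimit, hlimit.congr' ?_⟩
  filter_upwards [eventually_gt_atTop 0] with l hl0
  field_simp

/-- MF-based vector coded caching. With `Q_L = ⌈cL⌉`, rows `h_ϑ` of an i.i.d.
standard complex Gaussian `Q_L×L` matrix, `X_L = (P_t/(G·Q_L·L))‖h_k‖⁴` and
`Y_L = 1 + (P_t/(G·Q_L·L))·Σ_{ϑ≠k}|h_kᵀh_ϑ*|²`, it holds that
`E[ln(1+X_L/Y_L)] → ln(1 + (1/c)·P_t/(P_t+G))`; consequently the MF average sum-rate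
`R̄^{MF}(G,cL) = c·G·L·E[ln(1+X_L/Y_L)]` satisfies `R̄^{MF}(G,cL)/(cGL) → ln(1 + (1/c)·P_t/(P_t+G))`. -/
theorem stmt_0 {Ω : Type*} [MeasurableSpace Ω] (P : Measure Ω) [IsProbabilityMeasure P]
    (Pt : ℝ) (hPt : 0 < Pt) (G : ℕ) (hG : 1 ≤ G) (c : ℝ) (hc : 0 < c)
    (g : ℕ → ℕ → Ω → ℂ) (hmeas : ∀ i j, Measurable (g i j))
    (hgauss : IsStdComplexGaussianFamily P (fun p : ℕ × ℕ => g p.1 p.2)) (k : ℕ) :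
    let QL : ℕ → ℕ := fun l => Nat.ceil (c * l)
    let X : ℕ → Ω → ℝ := fun l ω =>
      Pt / (G * QL l * l) * (∑ j ∈ Finset.range l, Complex.normSq (g k j ω)) ^ 2
    let Y : ℕ → Ω → ℝ := fun l ω =>
      1 + Pt / (G * QL l * l) *
        ∑ ϑ ∈ (Finset.range (QL l)).filter (fun ϑ => ϑ ≠ k),
          Complex.normSq (∑ j ∈ Finset.range l, g k j ω * (starRingEnd ℂ) (g ϑ j ω))
    Filter.Tendsto (fun l : ℕ => ∫ ω, Real.log (1 + X l ω / Y l ω) ∂P)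
      Filter.atTop (nhds (Real.log (1 + 1 / c * (Pt / (Pt + G))))) ∧
    Filter.Tendsto
      (fun l : ℕ => (c * G * l * ∫ ω, Real.log (1 + X l ω / Y l ω) ∂P) / (c * G * l))
      Filter.atTop (nhds (Real.log (1 + 1 / c * (Pt / (Pt + G))))) :=
  stmt_0_general P Pt hPt.le G (by exact_mod_cast hG) c hc _
    ((tendsto_nat_ceil_mul_div_atTop hc.le).comp tendsto_natCast_atTop_atTop) g
    (hgauss.isIndepStandardized fun p ↦ hmeas p.1 p.2) k
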